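/- Let G be a simple graph, let π be an almost equitable partition of G with characteristic matrix P_π and quotient Laplacian L_π, and let ρ be an almost equitable partition of the quotient graph G_π with characteristic matrix P_ρ. If ρ is π-regular, then the kernel of P_ρ^T is L_π-invariant; that is, for every vector x with P_ρ^T x = 0, also P_ρ^T (L_π x) = 0. -/

import Mathlib

open Classical Matrix

noncomputable def lap {n : ℕ} (G : SimpleGraph (Fin n)) : Matrix (Fin n) (Fin n) ℝ :=
  Matrix.of fun i j =>
    (if i = j then ((G.neighborSet i).ncard : ℝ) else 0) - (if G.Adj i j then 1 else 0)

def IsTwin {n : ℕ} (G : SimpleGraph (Fin n)) (u v : Fin n) : Prop :=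
  u ≠ v ∧ G.neighborSet u \ {v} = G.neighborSet v \ {u}

def IsEigenvalue {n : ℕ} (M : Matrix (Fin n) (Fin n) ℝ) (μ : ℝ) : Prop :=
  ∃ x : Fin n → ℝ, x ≠ 0 ∧ M.mulVec x = μ • x

def HasSimpleSpectrum {n : ℕ} (M : Matrix (Fin n) (Fin n) ℝ) : Prop :=
  ∃ μ : Fin n → ℝ, Function.Injective μ ∧ ∀ i, IsEigenvalue M (μ i)

def Controllable {n : ℕ} (M : Matrix (Fin n) (Fin n) ℝ) (b : Fin n → ℝ) : Prop :=
  Submodule.span ℝ (Set.range fun k : Fin n => (M ^ (k : ℕ)).mulVec b) = ⊤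

def StronglyUncontrollable {n : ℕ} (G : SimpleGraph (Fin n)) : Prop :=
  G.Connected ∧ HasSimpleSpectrum (lap G) ∧
    ∀ b : Fin n → ℝ, (∀ i, b i = 0 ∨ b i = 1) → ¬ Controllable (lap G) b

def Pmat {n k : ℕ} (c : Fin n → Fin k) : Matrix (Fin n) (Fin k) ℝ :=
  Matrix.of fun i j => if c i = j then 1 else 0

def IsAEP {n k : ℕ} (G : SimpleGraph (Fin n)) (c : Fin n → Fin k) : Prop :=
  ∀ i j : Fin k, i ≠ j → ∀ x y : Fin n, c x = i → c y = i →
    (G.neighborSet x ∩ {z | c z = j}).ncard = (G.neighborSet y ∩ {z | c z = j}).ncard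

noncomputable def quotLap {n k : ℕ} (G : SimpleGraph (Fin n)) (c : Fin n → Fin k) :
    Matrix (Fin k) (Fin k) ℝ :=
  ((Pmat c)ᵀ * Pmat c)⁻¹ * (Pmat c)ᵀ * lap G * Pmat c

def IsQuotAEP {k m : ℕ} (Lq : Matrix (Fin k) (Fin k) ℝ) (r : Fin k → Fin m) : Prop :=
  ∀ a b : Fin m, a ≠ b → ∀ C C' : Fin k, r C = a → r C' = a →
    ∑ C'' ∈ Finset.univ.filter (fun C'' => r C'' = b), Lq C C'' =
      ∑ C'' ∈ Finset.univ.filter (fun C'' => r C'' = b), Lq C' C''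

def IsGraphAut {n : ℕ} (G : SimpleGraph (Fin n)) (σ : Equiv.Perm (Fin n)) : Prop :=
  ∀ x y, G.Adj x y ↔ G.Adj (σ x) (σ y)

def joinOne {n : ℕ} (G : SimpleGraph (Fin n)) : SimpleGraph (Fin (n + 1)) where
  Adj x y := x ≠ y ∧ ((x : ℕ) = n ∨ (y : ℕ) = n ∨
    ∃ (hx : (x : ℕ) < n) (hy : (y : ℕ) < n), G.Adj ⟨x, hx⟩ ⟨y, hy⟩)
  symm := by
    refine ⟨?_⟩
    rintro x y ⟨hxy, h⟩
    refine ⟨hxy.symm, ?_⟩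
    rcases h with h | h | ⟨hx, hy, h⟩
    exacts [Or.inr (Or.inl h), Or.inl h, Or.inr (Or.inr ⟨hy, hx, h.symm⟩)]
  loopless := ⟨fun x h => h.1 rfl⟩

def joinTwo {n : ℕ} (G : SimpleGraph (Fin n)) : SimpleGraph (Fin (n + 2)) where
  Adj x y := x ≠ y ∧ (((x : ℕ) < n ∧ n ≤ (y : ℕ)) ∨ ((y : ℕ) < n ∧ n ≤ (x : ℕ)) ∨
    ∃ (hx : (x : ℕ) < n) (hy : (y : ℕ) < n), G.Adj ⟨x, hx⟩ ⟨y, hy⟩)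
  symm := by
    refine ⟨?_⟩
    rintro x y ⟨hxy, h⟩
    refine ⟨hxy.symm, ?_⟩
    rcases h with h | h | ⟨hx, hy, h⟩
    exacts [Or.inr (Or.inl h), Or.inl h, Or.inr (Or.inr ⟨hy, hx, h.symm⟩)]
  loopless := ⟨fun x h => h.1 rfl⟩

def addPendant {n : ℕ} (G : SimpleGraph (Fin n)) (v : Fin n) : SimpleGraph (Fin (n + 1)) where
  Adj x y := ((x : ℕ) = n ∧ (y : ℕ) = (v : ℕ)) ∨ ((y : ℕ) = n ∧ (x : ℕ) = (v : ℕ)) ∨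
    ∃ (hx : (x : ℕ) < n) (hy : (y : ℕ) < n), G.Adj ⟨x, hx⟩ ⟨y, hy⟩
  symm := by
    refine ⟨?_⟩
    rintro x y (h | h | ⟨hx, hy, h⟩)
    exacts [Or.inr (Or.inl h), Or.inl h, Or.inr (Or.inr ⟨hy, hx, h.symm⟩)]
  loopless := by
    refine ⟨?_⟩
    intro x h
    have hv := v.isLt
    rcases h with ⟨h1, h2⟩ | ⟨h1, h2⟩ | ⟨hx, hy, h⟩
    · omega
    · omega
    · exact G.loopless.irrefl _ h

/-!
Write `P` for the characteristic matrix of `ρ`. The kernel of `Pᵀ` is `A`-invariant as soon as the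
column space of `P` is `Aᵀ`-invariant. For `A = L_π` the transpose is the conjugate `D * A * D⁻¹` by
the diagonal matrix `D` of cell sizes of `π`, because `D * A = P_πᵀ L P_π` is symmetric. Each factor
preserves the column space of `P`, that is, the vectors constant on the cells of `ρ`: for `D` and
`D⁻¹` this is `π`-regularity; for `A` it is almost equitability, where the missing condition on the
diagonal blocks follows from the vanishing of the row sums of `A`.
-/

section RangeInvariant

variable {ι κ R : Type*} [Fintype ι] [Fintype κ]

/-- The column space of `P` is invariant under `A`, expressed by the existence of a matrix of the
restriction of `A`. When `P` is the characteristic matrix of a partition, this says that the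
partition is equitable for `A`, with quotient matrix `X`. -/
def IsRangeInvariant [Semiring R] (P : Matrix ι κ R) (A : Matrix ι ι R) : Prop :=
  ∃ X : Matrix κ κ R, A * P = P * X

theorem IsRangeInvariant.mul [Semiring R] {P : Matrix ι κ R} {A B : Matrix ι ι R}
    (hA : IsRangeInvariant P A) (hB : IsRangeInvariant P B) : IsRangeInvariant P (A * B) := by
  obtain ⟨X, hX⟩ := hA
  obtain ⟨Y, hY⟩ := hB
  exact ⟨X * Y, by rw [Matrix.mul_assoc, hY, ← Matrix.mul_assoc, hX, Matrix.mul_assoc]⟩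

theorem IsRangeInvariant.transpose_mulVec_mulVec_eq_zero [CommSemiring R] {P : Matrix ι κ R}
    {A : Matrix ι ι R} (h : IsRangeInvariant P Aᵀ) {x : ι → R} (hx : Pᵀ *ᵥ x = 0) :
    Pᵀ *ᵥ (A *ᵥ x) = 0 := by
  obtain ⟨X, hX⟩ := h
  have hPA : Pᵀ * A = Xᵀ * Pᵀ := by
    simpa only [transpose_mul, transpose_transpose] using congrArg transpose hX
  rw [mulVec_mulVec, hPA, ← mulVec_mulVec, hx, mulVec_zero]

end RangeInvariant

section CharacteristicMatrix

variable {k m : ℕ} {r : Fin k → Fin m}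

theorem Pmat_mul_apply {κ : Type*} (r : Fin k → Fin m) (X : Matrix (Fin m) κ ℝ) (i : Fin k)
    (j : κ) : (Pmat r * X) i j = X (r i) j := by
  simp [Pmat, mul_apply]

theorem mul_Pmat_apply {ι : Type*} (A : Matrix ι (Fin k) ℝ) (r : Fin k → Fin m) (i : ι)
    (b : Fin m) : (A * Pmat r) i b = ∑ j with r j = b, A i j := by
  simp [Pmat, mul_apply, Finset.sum_filter]

theorem Pmat_mulVec_one (r : Fin k → Fin m) : Pmat r *ᵥ 1 = 1 := by
  ext i
  simp [Pmat, mulVec, dotProduct]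

theorem isRangeInvariant_Pmat_of_factorsThrough {A : Matrix (Fin k) (Fin k) ℝ}
    (h : (A * Pmat r).row.FactorsThrough r) : IsRangeInvariant (Pmat r) A := by
  refine ⟨of (Function.extend r (A * Pmat r).row 0), ?_⟩
  ext i b
  rw [Pmat_mul_apply, of_apply, h.extend_apply, row_apply]

theorem isRangeInvariant_Pmat_diagonal {d : Fin k → ℝ} (hd : d.FactorsThrough r) :
    IsRangeInvariant (Pmat r) (diagonal d) := by
  refine isRangeInvariant_Pmat_of_factorsThrough fun i j hij => ?_
  ext b
  simp only [row_apply, diagonal_mul, Pmat, of_apply, hd hij, hij]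

theorem IsQuotAEP.isRangeInvariant {A : Matrix (Fin k) (Fin k) ℝ} (hA : IsQuotAEP A r)
    (hrow : (A *ᵥ 1).FactorsThrough r) : IsRangeInvariant (Pmat r) A := by
  refine isRangeInvariant_Pmat_of_factorsThrough fun i j hij => ?_
  have off_diagonal : ∀ b ≠ r i, (A * Pmat r) i b = (A * Pmat r) j b := fun b hb => by
    simpa only [mul_Pmat_apply] using hA (r i) b hb.symm i j rfl hij.symm
  have row_sum : ∀ l, ∑ b, (A * Pmat r) l b = (A *ᵥ 1) l := fun l => by
    rw [← Pmat_mulVec_one r, mulVec_mulVec]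
    simp only [mulVec, dotProduct, Pi.one_apply, mul_one]
  ext b
  obtain rfl | hb := eq_or_ne b (r i)
  · have total : ∑ b, (A * Pmat r) i b = ∑ b, (A * Pmat r) j b := by
      rw [row_sum, row_sum, hrow hij]
    rw [← Finset.add_sum_erase _ _ (Finset.mem_univ (r i)),
      ← Finset.add_sum_erase _ _ (Finset.mem_univ (r i)),
      Finset.sum_congr rfl fun b hb => off_diagonal b (Finset.ne_of_mem_erase hb)] at total
    exact add_right_cancel total
  · exact off_diagonal b hb

end CharacteristicMatrix

section QuotientLaplacian

variable {n k : ℕ}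

theorem lap_eq_lapMatrix (G : SimpleGraph (Fin n)) : lap G = G.lapMatrix ℝ := by
  ext i j
  have ncard_eq_degree : (G.neighborSet i).ncard = G.degree i := by
    rw [Set.ncard_eq_toFinset_card', Set.toFinset_card, G.card_neighborSet_eq_degree]
  simp [lap, SimpleGraph.lapMatrix, SimpleGraph.degMatrix, diagonal_apply, ncard_eq_degree]

/-- The sizes of the cells of the partition `c`, as real numbers: the diagonal of `P_cᵀ * P_c`. -/
noncomputable def cellSize (c : Fin n → Fin k) (j : Fin k) : ℝ :=
  ({x | c x = j}.ncard : ℝ)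

theorem cellSize_ne_zero {c : Fin n → Fin k} (hc : Function.Surjective c) (j : Fin k) :
    cellSize c j ≠ 0 := by
  obtain ⟨x, hx⟩ := hc j
  exact Nat.cast_ne_zero.mpr (Set.ncard_ne_zero_of_mem (a := x) hx)

theorem Pmat_transpose_mul_Pmat (c : Fin n → Fin k) :
    (Pmat c)ᵀ * Pmat c = diagonal (cellSize c) := by
  ext i j
  rw [mul_Pmat_apply, diagonal_apply]
  obtain rfl | hij := eq_or_ne i j
  · simp [Pmat, cellSize, Set.ncard_eq_toFinset_card', Finset.filter_filter]
  · rw [if_neg hij]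
    refine Finset.sum_eq_zero fun x hx => ?_
    simp [Pmat, (Finset.mem_filter.mp hx).2, hij.symm]

theorem diagonal_cellSize_mul_diagonal_inv {c : Fin n → Fin k} (hc : Function.Surjective c) :
    diagonal (cellSize c) * diagonal (cellSize c)⁻¹ = 1 := by
  rw [diagonal_mul_diagonal', ← diagonal_one]
  congr 1
  ext j
  exact mul_inv_cancel₀ (cellSize_ne_zero hc j)

theorem quotLap_mulVec_one (G : SimpleGraph (Fin n)) (c : Fin n → Fin k) :
    quotLap G c *ᵥ 1 = 0 := by
  have lap_one : lap G *ᵥ 1 = 0 := by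
    rw [lap_eq_lapMatrix]
    exact G.lapMatrix_mulVec_const_eq_zero
  rw [quotLap, ← mulVec_mulVec, Pmat_mulVec_one, ← mulVec_mulVec, lap_one, mulVec_zero]

theorem quotLap_transpose (G : SimpleGraph (Fin n)) {c : Fin n → Fin k}
    (hc : Function.Surjective c) :
    (quotLap G c)ᵀ = diagonal (cellSize c) * quotLap G c * diagonal (cellSize c)⁻¹ := by
  set S := (Pmat c)ᵀ * lap G * Pmat c with hS
  have S_symm : Sᵀ = S := by
    rw [hS, lap_eq_lapMatrix]
    simp only [transpose_mul, transpose_transpose, (G.isSymm_lapMatrix ℝ).eq, Matrix.mul_assoc]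
  have quotLap_eq : quotLap G c = diagonal (cellSize c)⁻¹ * S := by
    rw [quotLap, Pmat_transpose_mul_Pmat,
      inv_eq_right_inv (diagonal_cellSize_mul_diagonal_inv hc)]
    simp only [hS, Matrix.mul_assoc]
  rw [quotLap_eq, transpose_mul, S_symm, diagonal_transpose, ← Matrix.mul_assoc,
    diagonal_cellSize_mul_diagonal_inv hc, Matrix.one_mul]

end QuotientLaplacian

theorem stmt11_general {n k m : ℕ} (G : SimpleGraph (Fin n))
    (c : Fin n → Fin k) (hcsurj : Function.Surjective c)
    (r : Fin k → Fin m) (hρ : IsQuotAEP (quotLap G c) r)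
    (hreg : ∀ j j' : Fin k, r j = r j' → {x | c x = j}.ncard = {x | c x = j'}.ncard)
    (x : Fin k → ℝ) (hx : (Pmat r)ᵀ.mulVec x = 0) :
    (Pmat r)ᵀ.mulVec ((quotLap G c).mulVec x) = 0 := by
  have size_const : (cellSize c).FactorsThrough r := fun j j' h =>
    congrArg Nat.cast (hreg j j' h)
  have inv_size_const : (cellSize c)⁻¹.FactorsThrough r := fun _ _ h =>
    congrArg Inv.inv (size_const h)
  have quotLap_invariant : IsRangeInvariant (Pmat r) (quotLap G c) :=
    hρ.isRangeInvariant fun _ _ _ => by simp only [quotLap_mulVec_one, Pi.zero_apply]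
  have transpose_invariant : IsRangeInvariant (Pmat r) (quotLap G c)ᵀ := by
    rw [quotLap_transpose G hcsurj]
    exact ((isRangeInvariant_Pmat_diagonal size_const).mul quotLap_invariant).mul
      (isRangeInvariant_Pmat_diagonal inv_size_const)
  exact transpose_invariant.transpose_mulVec_mulVec_eq_zero hx

theorem stmt11 {n k m : ℕ} (G : SimpleGraph (Fin n))
    (c : Fin n → Fin k) (hcsurj : Function.Surjective c) (hπ : IsAEP G c)
    (r : Fin k → Fin m) (hrsurj : Function.Surjective r)
    (hρ : IsQuotAEP (quotLap G c) r)
    (hreg : ∀ j j' : Fin k, r j = r j' → {x | c x = j}.ncard = {x | c x = j'}.ncard)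
    (x : Fin k → ℝ) (hx : (Pmat r)ᵀ.mulVec x = 0) :
    (Pmat r)ᵀ.mulVec ((quotLap G c).mulVec x) = 0 :=
  stmt11_general G c hcsurj r hρ hreg x hx
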